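/- arXiv:1603.01986 — 4 statements merged into one kernel-verified Lean document; each statement's English description precedes it below -/
import Mathlib

section
/- For every natural number n and every real number s > -1, the Mellin transform of q_n on [0,1] satisfies ∫₀¹ q_n(x)·x^s dx = (-1)^n · (-s/2)_n / (s+1)_{n+1}, where (a)_m = a(a+1)⋯(a+m-1) denotes the Pochhammer symbol (rising factorial). -/
open MeasureTheory intervalIntegral

/-- The Pochhammer symbol (rising factorial) `(a)_m = a(a+1)⋯(a+m-1)` over `ℝ`. -/
noncomputable def poch (a : ℝ) (m : ℕ) : ℝ := (ascPochhammer ℝ m).eval a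

/-- The polynomial `p_n(x) = ∑_{k=0}^n (n choose k) ((k/2+1)_n / n!) (-1)^{n-k} x^k`. -/
noncomputable def pAlp (n : ℕ) (x : ℝ) : ℝ :=
  ∑ k ∈ Finset.range (n + 1),
    (n.choose k : ℝ) * (poch ((k : ℝ) / 2 + 1) n / (n.factorial : ℝ)) * (-1) ^ (n - k) * x ^ k
/-- The polynomial `q_n(x) = ∑_{k=0}^n (n choose k) (((k+1)/2)_n / n!) (-1)^{n-k} x^k`. -/
noncomputable def qAlp (n : ℕ) (x : ℝ) : ℝ :=
  ∑ k ∈ Finset.range (n + 1),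
    (n.choose k : ℝ) * (poch (((k : ℝ) + 1) / 2) n / (n.factorial : ℝ)) * (-1) ^ (n - k) * x ^ k

lemma aux_base (i : ℕ) : ∏ j ∈ Finset.range i, ((j : ℝ) - i) = (-1) ^ i * i.factorial := by
  induction i with
  | zero => simp
  | succ i ih =>
    rw [Finset.prod_range_succ']
    have : ∀ j ∈ Finset.range i, (((j + 1 : ℕ) : ℝ) - ((i + 1 : ℕ) : ℝ)) = (j : ℝ) - i := by
      intro j _; push_cast; ring
    rw [Finset.prod_congr rfl this, ih, Nat.factorial_succ]
    push_cast; ring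

lemma aux_weight (i d : ℕ) :
    ∏ j ∈ (Finset.range (i + d + 1)).erase i, ((j : ℝ) - i) =
      (-1) ^ i * i.factorial * d.factorial := by
  induction d with
  | zero =>
    rw [add_zero, Finset.range_add_one, Finset.erase_insert (by simp), aux_base]; simp
  | succ d ih =>
    have : (Finset.range (i + (d + 1) + 1)).erase i =
        insert (i + d + 1) ((Finset.range (i + d + 1)).erase i) := by
      ext x; simp only [Finset.mem_erase, Finset.mem_range, Finset.mem_insert]; omega
    rw [this, Finset.prod_insert (by simp), ih, Nat.factorial_succ]
    push_cast; ring

lemma poch_prod (a : ℝ) (m : ℕ) : poch a m = ∏ j ∈ Finset.range m, (a + j) := by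
  induction m with
  | zero => simp [poch]
  | succ m ih =>
    rw [Finset.prod_range_succ, ← ih]
    exact ascPochhammer_succ_eval m a

lemma aux_pf (n : ℕ) (s : ℝ) (hs : -1 < s) :
    poch (-s / 2) n / poch (s + 1) (n + 1) =
      ∑ k ∈ Finset.range (n + 1), ((-1) ^ k * k.factorial * (n - k).factorial : ℝ)⁻¹ *
        (s + k + 1)⁻¹ * poch (((k : ℝ) + 1) / 2) n := by
  set v : ℕ → ℝ := fun k => -((k : ℝ) + 1) with hv
  set P : Polynomial ℝ := (ascPochhammer ℝ n).comp (Polynomial.C (-1 / 2) * Polynomial.X) with hP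
  have hPe : ∀ t, P.eval t = poch (-t / 2) n := by
    intro t
    simp only [hP, Polynomial.eval_comp, poch, Polynomial.eval_mul, Polynomial.eval_C,
      Polynomial.eval_X]
    congr 1; ring
  have hdeg : P.degree < (Finset.range (n + 1)).card := by
    rw [Finset.card_range]
    refine lt_of_le_of_lt Polynomial.degree_le_natDegree ?_
    have : P.natDegree ≤ n := by
      rw [hP, Polynomial.natDegree_comp, ascPochhammer_natDegree]
      have : (Polynomial.C (-1 / 2 : ℝ) * Polynomial.X).natDegree ≤ 1 := by compute_degree
      nlinarith
    exact_mod_cast Nat.lt_succ_of_le this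
  have hinj : Set.InjOn v (Finset.range (n + 1)) := by
    intro a _ b _ h
    simpa [hv] using h
  have hx : ∀ i ∈ Finset.range (n + 1), s ≠ v i := by
    intro i _ h
    have : (0 : ℝ) ≤ i := i.cast_nonneg
    simp only [hv] at h
    linarith
  have key := congrArg (Polynomial.eval s) (Lagrange.eq_interpolate hinj hdeg)
  rw [Lagrange.eval_interpolate_not_at_node _ hx, hPe] at key
  have hn := Lagrange.eval_nodal_not_at_node hx
  have hn2 : Polynomial.eval s (Lagrange.nodal (Finset.range (n + 1)) v) = poch (s + 1) (n + 1) := by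
    rw [Lagrange.eval_nodal, poch_prod]
    refine Finset.prod_congr rfl fun j _ => ?_
    simp only [hv]; ring
  rw [hn2] at key hn
  rw [key, mul_div_cancel_left₀ _ hn]
  refine Finset.sum_congr rfl fun k hk => ?_
  obtain ⟨d, rfl⟩ := Nat.exists_eq_add_of_le (Nat.lt_succ_iff.mp (Finset.mem_range.mp hk))
  rw [hPe, Nat.add_sub_cancel_left, ← aux_weight, Lagrange.nodalWeight, Finset.prod_inv_distrib]
  congr 1
  · congr 1
    · congr 1
      refine Finset.prod_congr rfl fun j _ => ?_
      simp only [hv]; ring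
    · simp only [hv]; congr 1; ring
  · simp only [hv, neg_neg]

/-- Mellin transform of `q_n` on `[0,1]`:
`∫₀¹ q_n(x) x^s dx = (-1)^n (-s/2)_n / (s+1)_{n+1}` for `s > -1`. -/
theorem mellin_qAlp (n : ℕ) (s : ℝ) (hs : -1 < s) :
    ∫ x in (0 : ℝ)..1, qAlp n x * x ^ s =
      (-1) ^ n * poch (-s / 2) n / poch (s + 1) (n + 1) := by
  have hk : ∀ k : ℕ, -1 < s + k := fun k => by
    have : (0 : ℝ) ≤ k := k.cast_nonneg
    linarith
  have h1 : ∫ x in (0 : ℝ)..1, qAlp n x * x ^ s = ∫ x in (0 : ℝ)..1,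
      ∑ k ∈ Finset.range (n + 1), ((n.choose k : ℝ) *
        (poch (((k : ℝ) + 1) / 2) n / (n.factorial : ℝ)) * (-1) ^ (n - k)) * x ^ (s + k) := by
    refine intervalIntegral.integral_congr_ae (Filter.Eventually.of_forall fun x hx => ?_)
    rw [Set.uIoc_of_le zero_le_one] at hx
    rw [qAlp, Finset.sum_mul]
    refine Finset.sum_congr rfl fun k _ => ?_
    rw [Real.rpow_add hx.1, Real.rpow_natCast]; ring
  rw [h1, intervalIntegral.integral_finsetSum
    (fun k _ => (intervalIntegral.intervalIntegrable_rpow' (hk k)).const_mul _),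
    mul_div_assoc, aux_pf n s hs, Finset.mul_sum]
  refine Finset.sum_congr rfl fun k hk' => ?_
  have h0 : s + k + 1 ≠ 0 := by linarith [hk k]
  rw [intervalIntegral.integral_const_mul, integral_rpow (Or.inl (hk k)), Real.one_rpow,
    Real.zero_rpow h0]
  obtain ⟨d, rfl⟩ := Nat.exists_eq_add_of_le (Nat.lt_succ_iff.mp (Finset.mem_range.mp hk'))
  rw [Nat.add_sub_cancel_left, Nat.cast_add_choose, pow_add]
  have a1 : ((k + d).factorial : ℝ) ≠ 0 := by positivity
  have a2 : (k.factorial : ℝ) ≠ 0 := by positivity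
  have a3 : (d.factorial : ℝ) ≠ 0 := by positivity
  have a4 : ((-1 : ℝ) ^ k) ≠ 0 := by simp
  field_simp
  try ring
end

section
/- For every natural number n ≥ 1 and every integer j with 0 ≤ j ≤ n-1, the even moment ∫₀¹ q_n(x)·x^{2j} dx = 0. In other words, all even moments of q_n on [0,1] of order at most 2n-2 vanish. -/
open MeasureTheory intervalIntegral

lemma poch_eq_prod (a : ℝ) (m : ℕ) : poch a m = ∏ i ∈ Finset.range m, (a + i) := by
  induction m with
  | zero => simp [poch]
  | succ m ih =>
    rw [Finset.prod_range_succ, ← ih, poch, poch, ascPochhammer_succ_eval]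

noncomputable def auxPoly (n j : ℕ) : Polynomial ℝ :=
  ∏ i ∈ (Finset.range n).erase j,
    (Polynomial.C (1 / 2 : ℝ) * Polynomial.X + Polynomial.C (1 / 2 + (i : ℝ)))

lemma auxPoly_natDegree (n j : ℕ) (hj : j < n) : (auxPoly n j).natDegree < n := by
  have h1 : (auxPoly n j).natDegree ≤ ∑ i ∈ (Finset.range n).erase j, 1 :=
    (Polynomial.natDegree_prod_le _ _).trans
      (Finset.sum_le_sum fun i _ => Polynomial.natDegree_linear_le)
  rw [Finset.sum_const, Finset.card_erase_of_mem (Finset.mem_range.2 hj)] at h1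
  simp at h1
  omega

lemma poch_auxPoly (n j : ℕ) (hj : j < n) (k : ℝ) :
    poch ((k + 1) / 2) n = (k + 2 * j + 1) / 2 * (auxPoly n j).eval k := by
  rw [poch_eq_prod, ← Finset.mul_prod_erase _ _ (Finset.mem_range.2 hj), auxPoly,
    Polynomial.eval_prod]
  congr 1
  · ring
  · refine Finset.prod_congr rfl fun i _ => ?_
    simp
    ring

/-- All even moments of `q_n` on `[0,1]` of order at most `2n-2` vanish. -/
theorem qAlp_even_moments (n : ℕ) (hn : 1 ≤ n) (j : ℕ) (hj : j ≤ n - 1) :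
    ∫ x in (0 : ℝ)..1, qAlp n x * x ^ (2 * j) = 0 := by
  have hjn : j < n := by omega
  have h0 := congrFun (Polynomial.fwdDiff_iter_eq_zero_of_degree_lt (auxPoly_natDegree n j hjn)) 0
  rw [fwdDiff_iter_eq_sum_shift] at h0
  simp only [qAlp, Finset.sum_mul]
  rw [intervalIntegral.integral_finsetSum
    (fun k _ => Continuous.intervalIntegrable (by fun_prop) _ _)]
  have h1 : ∀ k ∈ Finset.range (n + 1), (∫ x in (0 : ℝ)..1,
      (n.choose k : ℝ) * (poch (((k : ℝ) + 1) / 2) n / (n.factorial : ℝ)) * (-1) ^ (n - k) * x ^ k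
        * x ^ (2 * j)) = (1 / (2 * (n.factorial : ℝ))) *
        (((-1 : ℤ) ^ (n - k) * n.choose k) • (auxPoly n j).eval (0 + k • (1 : ℝ))) := by
    intro k _
    simp only [mul_assoc, ← pow_add, intervalIntegral.integral_const_mul, integral_pow]
    rw [poch_auxPoly n j hjn]
    have h2 : (k : ℝ) + 2 * j + 1 ≠ 0 := by positivity
    have h3 : (n.factorial : ℝ) ≠ 0 := by positivity
    simp only [zsmul_eq_mul, nsmul_eq_mul]
    push_cast
    simp
    field_simp
  rw [Finset.sum_congr rfl h1, ← Finset.mul_sum, h0]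
  simp
end

section
/- Rodrigues-type formula for q_n: for every natural number n and every real x > 0, q_n(x) = ((-1)^n / (2^n · n!)) · x · (D*)^n [x^{2n-1}(1-x)^n](x), where D* is the operator (D*f)(x) = f'(x)/x and (D*)^n denotes its n-fold iteration applied to the function x ↦ x^{2n-1}(1-x)^n on (0,∞). -/
open MeasureTheory intervalIntegral

/-- The differential operator `D* f = f' / x`. -/
noncomputable def Dstar (f : ℝ → ℝ) : ℝ → ℝ := fun x => deriv f x / x

lemma poch_succ_aux (a : ℝ) (m : ℕ) : poch a (m + 1) = a * poch (a + 1) m := by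
  simp [poch, ascPochhammer_succ_left, Polynomial.eval_comp]

lemma Dstar_iter_aux (s : Finset ℕ) (c a : ℕ → ℝ) (f : ℝ → ℝ)
    (hf : ∀ y : ℝ, 0 < y → f y = ∑ k ∈ s, c k * y ^ (a k)) (m : ℕ) :
    ∀ x : ℝ, 0 < x → (Dstar^[m] f) x =
      ∑ k ∈ s, c k * (2 ^ m * poch (a k / 2 - m + 1) m) * x ^ (a k - 2 * m) := by
  induction m with
  | zero =>
    intro x hx
    simp [hf x hx, poch]
  | succ m ih =>
    intro x hx
    rw [Function.iterate_succ_apply']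
    have he : (Dstar^[m] f) =ᶠ[nhds x] fun x =>
        ∑ k ∈ s, c k * (2 ^ m * poch (a k / 2 - m + 1) m) * x ^ (a k - 2 * m) := by
      filter_upwards [lt_mem_nhds hx] with y hy using ih y hy
    have hd : HasDerivAt (fun x : ℝ =>
        ∑ k ∈ s, c k * (2 ^ m * poch (a k / 2 - m + 1) m) * x ^ (a k - 2 * m))
        (∑ k ∈ s, c k * (2 ^ m * poch (a k / 2 - m + 1) m) *
          ((a k - 2 * m) * x ^ (a k - 2 * m - 1))) x := by
      apply HasDerivAt.fun_sum
      intro k _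
      exact (Real.hasDerivAt_rpow_const (Or.inl hx.ne')).const_mul _
    unfold Dstar
    change deriv (Dstar^[m] f) x / x = _
    rw [he.deriv_eq, hd.deriv, Finset.sum_div]
    apply Finset.sum_congr rfl
    intro k _
    have h1 : a k - 2 * ((m + 1 : ℕ) : ℝ) = (a k - 2 * m - 1) - 1 := by push_cast; ring
    have h2 : a k / 2 - ((m + 1 : ℕ) : ℝ) + 1 = a k / 2 - m := by push_cast; ring
    rw [h1, h2, Real.rpow_sub_one hx.ne' (a k - 2 * m - 1), poch_succ_aux]
    ring

/-- Rodrigues-type formula: `q_n(x) = ((-1)^n / (2^n n!)) x (D*)^n [x^{2n-1}(1-x)^n](x)`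
for `x > 0`, where `x^{2n-1}` is the real power `x ↦ x^(2n-1)` on `(0,∞)`. -/
theorem rodrigues_qAlp (n : ℕ) (x : ℝ) (hx : 0 < x) :
    qAlp n x = ((-1) ^ n / (2 ^ n * (n.factorial : ℝ))) * x *
      (Dstar^[n] (fun y : ℝ => y ^ (2 * (n : ℝ) - 1) * (1 - y) ^ n)) x := by
  have hf : ∀ y : ℝ, 0 < y → (fun y : ℝ => y ^ (2 * (n : ℝ) - 1) * (1 - y) ^ n) y =
      ∑ k ∈ Finset.range (n + 1),
        (fun k : ℕ => (-1 : ℝ) ^ k * (n.choose k : ℝ)) k *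
          y ^ ((fun k : ℕ => 2 * (n : ℝ) - 1 + k) k) := by
    intro y hy
    have hb : (1 - y) ^ n = (-y + 1) ^ n := by ring
    simp only
    rw [hb, add_pow, Finset.mul_sum]
    apply Finset.sum_congr rfl
    intro k _
    rw [Real.rpow_add hy, Real.rpow_natCast, neg_pow y k]
    ring
  rw [Dstar_iter_aux _ _ _ _ hf n x hx, qAlp, Finset.mul_sum]
  apply Finset.sum_congr rfl
  intro k hk
  have hkn : k ≤ n := by simpa [Nat.lt_succ_iff] using hk
  have h1 : (2 * (n : ℝ) - 1 + k) / 2 - n + 1 = ((k : ℝ) + 1) / 2 := by ring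
  have h2 : 2 * (n : ℝ) - 1 + k - 2 * n = (k : ℝ) - 1 := by ring
  have h3 : (-1 : ℝ) ^ n = (-1) ^ (n - k) * (-1) ^ k := by
    rw [← pow_add, Nat.sub_add_cancel hkn]
  have h4 : (-1 : ℝ) ^ k * (-1) ^ k = 1 := by
    rw [← mul_pow]; norm_num
  simp only [h1, h2]
  rw [Real.rpow_sub_one hx.ne', Real.rpow_natCast, h3]
  have hn : (n.factorial : ℝ) ≠ 0 := by positivity
  field_simp
  linear_combination (-(n.choose k : ℝ) * poch (((k : ℝ) + 1) / 2) n) * h4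
end

section
/- Off-diagonal type I Legendre-Angelesco polynomials: for every natural number n ≥ 1, set b_n = 2·(n/2+1)_n·(2n)!/(3n+1)!, β₁ = (n/2+1)_n/n! (= binom(n+n/2, n)) and β₂ = ((n+1)/2)_n/n! (= binom(n+(n-1)/2, n)). Define B(x) = (β₁·q_n(x) − β₂·p_n(x))/b_n and A(x) = (β₁·q_n(−x) + β₂·p_n(−x))/b_n. Then B is a polynomial of degree at most n−1, A is a polynomial of degree n, and the function Q(x) = A(x) for x ∈ [−1,0), Q(x) = B(x) for x ∈ [0,1], Q(x)=0 otherwise, satisfies ∫_{−1}^1 Q(x)·x^k dx = 0 for 0 ≤ k ≤ 2n−1 and ∫_{−1}^1 Q(x)·x^{2n} dx = 1. (Thus A = A_{n+1,n} and B = B_{n+1,n} are the type I Legendre-Angelesco polynomials for the multi-index (n+1,n).) -/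
open MeasureTheory intervalIntegral Polynomial

theorem aux_inv (n : ℕ) : ∀ a : ℝ, 0 < a →
    ((fwdDiff (1:ℝ))^[n] (fun r : ℝ => 1 / r)) a = (-1) ^ n * n.factorial / poch a (n + 1) := by
  induction n with
  | zero => intro a ha; simp [poch]
  | succ n ih =>
    intro a ha
    rw [Function.iterate_succ_apply', fwdDiff, ih a ha, ih (a + 1) (by linarith)]
    have h1 : poch a (n + 1 + 1) = a * poch (a + 1) (n + 1) := by
      simp only [poch]; rw [ascPochhammer_succ_left]; simp [eval_comp]
    have h2 : poch a (n + 1 + 1) = poch a (n + 1) * (a + (n + 1 : ℕ)) := by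
      simp only [poch]; rw [ascPochhammer_succ_eval]
    have h3 : 0 < poch a (n + 1) := ascPochhammer_pos _ _ ha
    have h4 : 0 < poch (a + 1) (n + 1) := ascPochhammer_pos _ _ (by linarith)
    have h5 : 0 < poch a (n + 1 + 1) := ascPochhammer_pos _ _ ha
    have e1 : 1 / poch (a + 1) (n + 1) = a / poch a (n + 1 + 1) := by
      rw [h1]; field_simp
    have e2 : 1 / poch a (n + 1) = (a + (n + 1 : ℕ)) / poch a (n + 1 + 1) := by
      rw [h2]; field_simp
    rw [← mul_one_div, e1, ← mul_one_div _ (poch a (n + 1)), e2, Nat.factorial_succ]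
    push_cast
    ring


theorem aux_sum (n : ℕ) (f : ℝ[X]) (hf : f.natDegree ≤ n) (a : ℝ) (ha : 0 < a) :
    ∑ k ∈ Finset.range (n + 1), (n.choose k : ℝ) * f.eval (k : ℝ) * (-1) ^ (n - k) / (k + a) =
      (-1) ^ n * n.factorial * f.eval (-a) / poch a (n + 1) := by
  have h1 := aux_inv n a ha
  rw [fwdDiff_iter_eq_sum_shift] at h1
  have hroot : IsRoot (f - C (f.eval (-a))) (-a) := by simp
  obtain ⟨g, hg⟩ := dvd_iff_isRoot.2 hroot
  have hfe : ∀ x : ℝ, f.eval x = f.eval (-a) + (x + a) * g.eval x := by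
    intro x
    have := congrArg (eval x) hg
    simp at this
    linarith
  have h2 : ∑ k ∈ Finset.range (n + 1), (n.choose k : ℝ) * g.eval (k : ℝ) * (-1) ^ (n - k) = 0 := by
    by_cases hg0 : g = 0
    · simp [hg0]
    have hd : g.natDegree < n := by
      have e := congrArg natDegree hg
      rw [natDegree_sub_C, natDegree_mul (X_sub_C_ne_zero _) hg0, natDegree_X_sub_C] at e
      omega
    have := congrFun (Polynomial.fwdDiff_iter_eq_zero_of_degree_lt hd) 0
    rw [fwdDiff_iter_eq_sum_shift] at this
    rw [Pi.zero_apply] at this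
    rw [← this]
    refine Finset.sum_congr rfl fun k _ => ?_
    simp
    ring
  calc _ = f.eval (-a) * (∑ k ∈ Finset.range (n + 1), ((-1 : ℤ) ^ (n - k) * (n.choose k : ℤ)) • (1 / (a + k • (1:ℝ)))) + ∑ k ∈ Finset.range (n + 1), (n.choose k : ℝ) * g.eval (k : ℝ) * (-1) ^ (n - k) := by
        rw [Finset.mul_sum, ← Finset.sum_add_distrib]
        refine Finset.sum_congr rfl fun k _ => ?_
        have : (k : ℝ) + a ≠ 0 := by positivity
        have : a + (k : ℝ) ≠ 0 := by positivity
        rw [hfe k]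
        simp
        field_simp
        ring
    _ = _ := by rw [h2, h1]; ring

noncomputable def gAlp (n : ℕ) (c : ℝ) : ℝ[X] :=
  ∑ k ∈ Finset.range (n + 1),
    C ((n.choose k : ℝ) * (poch ((k : ℝ) / 2 + c) n / (n.factorial : ℝ)) * (-1) ^ (n - k)) * X ^ k

theorem gAlp_p (n : ℕ) (x : ℝ) : pAlp n x = (gAlp n 1).eval x := by
  simp [pAlp, gAlp, eval_finsetSum]

theorem gAlp_q (n : ℕ) (x : ℝ) : qAlp n x = (gAlp n (1 / 2)).eval x := by
  simp only [qAlp, gAlp, eval_finsetSum, eval_mul, eval_C, eval_pow, eval_X]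
  refine Finset.sum_congr rfl fun k _ => ?_
  rw [add_div]

theorem gAlp_deg (n : ℕ) (c : ℝ) : (gAlp n c).degree ≤ n := by
  refine (degree_sum_le _ _).trans (Finset.sup_le fun k hk => ?_)
  refine (degree_C_mul_X_pow_le _ _).trans ?_
  have := Finset.mem_range.1 hk
  exact_mod_cast (by omega : k ≤ n)

theorem gAlp_coeff (n : ℕ) (c : ℝ) :
    (gAlp n c).coeff n = poch ((n : ℝ) / 2 + c) n / (n.factorial : ℝ) := by
  simp only [gAlp, finsetSum_coeff, coeff_C_mul, coeff_X_pow]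
  rw [Finset.sum_eq_single n]
  · simp
  · intro k _ hk
    simp [Ne.symm hk]
  · intro h
    simp at h

theorem gAlp_int (n : ℕ) (c : ℝ) (m : ℕ) :
    ∫ x in (0 : ℝ)..1, (gAlp n c).eval x * x ^ m =
      (-1) ^ n * poch (c - (m + 1) / 2) n / poch ((m : ℝ) + 1) (n + 1) := by
  let f : ℝ[X] := (ascPochhammer ℝ n).comp (C (1 / 2) * X + C c)
  have hf : f.natDegree ≤ n := by
    refine natDegree_comp_le.trans ?_
    rw [ascPochhammer_natDegree]
    have : (C (1 / 2 : ℝ) * X + C c).natDegree ≤ 1 := natDegree_linear_le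
    nlinarith
  have hfe : ∀ x : ℝ, f.eval x = poch (x / 2 + c) n := by
    intro x; simp only [f, poch, eval_comp, eval_add, eval_mul, eval_C, eval_X]
    congr 1; ring
  have hs := aux_sum n f hf ((m : ℝ) + 1) (by positivity)
  have hfac : (n.factorial : ℝ) ≠ 0 := by positivity
  have e : ∀ x : ℝ, (gAlp n c).eval x * x ^ m = ∑ k ∈ Finset.range (n + 1),
      ((n.choose k : ℝ) * (f.eval (k : ℝ) / (n.factorial : ℝ)) * (-1) ^ (n - k)) * x ^ (k + m) := by
    intro x
    simp only [gAlp, eval_finsetSum, eval_mul, eval_C, eval_pow, eval_X, Finset.sum_mul]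
    refine Finset.sum_congr rfl fun k _ => ?_
    rw [hfe, pow_add]; ring
  simp only [e]
  rw [intervalIntegral.integral_finsetSum
    (fun i _ => (Continuous.intervalIntegrable (by fun_prop) _ _))]
  have : ∀ k ∈ Finset.range (n + 1), ∫ x in (0:ℝ)..1,
      ((n.choose k : ℝ) * (f.eval (k : ℝ) / (n.factorial : ℝ)) * (-1) ^ (n - k)) * x ^ (k + m)
      = ((n.choose k : ℝ) * f.eval (k : ℝ) * (-1) ^ (n - k) / (k + ((m : ℝ) + 1))) / n.factorial := by
    intro k _
    rw [intervalIntegral.integral_const_mul, integral_pow]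
    push_cast
    simp
    field_simp
    ring
  rw [Finset.sum_congr rfl this, ← Finset.sum_div, hs, hfe]
  have e2 : -((m : ℝ) + 1) / 2 + c = c - (m + 1) / 2 := by ring
  rw [e2]
  field_simp

theorem poch_zero (n j : ℕ) (h : j < n) : poch (-(j : ℝ)) n = 0 :=
  ascPochhammer_eval_neg_coe_nat_of_lt h

theorem poch_neg (n : ℕ) : poch (-(n : ℝ)) n = (-1) ^ n * n.factorial := by
  simp only [poch]
  rw [ascPochhammer_eval_neg_eq_descPochhammer, descPochhammer_eval_eq_descFactorial,
    Nat.descFactorial_self]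

theorem poch_fac (n : ℕ) :
    ((2 * n).factorial : ℝ) * poch (((2 * n : ℕ) : ℝ) + 1) (n + 1) = (3 * n + 1).factorial := by
  have := factorial_mul_ascPochhammer ℝ (2 * n) (n + 1)
  simp only [poch]
  rw [this]
  congr 2; ring

theorem typeI_offdiagonal (n : ℕ) (hn : 1 ≤ n) (b β₁ β₂ : ℝ)
    (hb : b = 2 * poch ((n : ℝ) / 2 + 1) n * ((2 * n).factorial : ℝ) /
      ((3 * n + 1).factorial : ℝ))
    (hβ₁ : β₁ = poch ((n : ℝ) / 2 + 1) n / (n.factorial : ℝ))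
    (hβ₂ : β₂ = poch (((n : ℝ) + 1) / 2) n / (n.factorial : ℝ))
    (A B : ℝ → ℝ)
    (hB : ∀ x, B x = (β₁ * qAlp n x - β₂ * pAlp n x) / b)
    (hA : ∀ x, A x = (β₁ * qAlp n (-x) + β₂ * pAlp n (-x)) / b)
    (Q : ℝ → ℝ)
    (hQ1 : ∀ x ∈ Set.Ico (-1 : ℝ) 0, Q x = A x)
    (hQ2 : ∀ x ∈ Set.Icc (0 : ℝ) 1, Q x = B x)
    (hQ3 : ∀ x, x ∉ Set.Icc (-1 : ℝ) 1 → Q x = 0) :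
    (∃ PB : Polynomial ℝ, PB.degree ≤ ((n - 1 : ℕ) : WithBot ℕ) ∧ ∀ x, B x = PB.eval x) ∧
    (∃ PA : Polynomial ℝ, PA.degree = (n : WithBot ℕ) ∧ ∀ x, A x = PA.eval x) ∧
    (∀ k : ℕ, k ≤ 2 * n - 1 → ∫ x in (-1 : ℝ)..1, Q x * x ^ k = 0) ∧
      ∫ x in (-1 : ℝ)..1, Q x * x ^ (2 * n) = 1 := by
  have hP1 : 0 < poch ((n : ℝ) / 2 + 1) n := ascPochhammer_pos _ _ (by positivity)
  have hP2 : 0 < poch (((n : ℝ) + 1) / 2) n := ascPochhammer_pos _ _ (by positivity)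
  have hb0 : 0 < b := by rw [hb]; positivity
  have hβ₁0 : 0 < β₁ := by rw [hβ₁]; positivity
  have hβ₂0 : 0 < β₂ := by rw [hβ₂]; positivity
  have hc1 : (gAlp n 1).coeff n = β₁ := by rw [gAlp_coeff, hβ₁]
  have hc2 : (gAlp n (1 / 2)).coeff n = β₂ := by rw [gAlp_coeff, hβ₂, add_div]
  have hBc : ∀ x, B x = (C b⁻¹ * (C β₁ * gAlp n (1 / 2) - C β₂ * gAlp n 1)).eval x := by
    intro x; rw [hB, gAlp_p, gAlp_q]; simp; ring
  have hAc : ∀ x, A x = ((C b⁻¹ * (C β₁ * gAlp n (1 / 2) + C β₂ * gAlp n 1)).comp (-X)).eval x := by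
    intro x; rw [hA, gAlp_p, gAlp_q]; simp [eval_comp]; ring
  have hdeg : ∀ c : ℝ, (gAlp n c).natDegree ≤ n := fun c =>
    natDegree_le_iff_degree_le.2 (gAlp_deg n c)
  have hcl : ∀ c d : ℝ, (C d * gAlp n c).natDegree ≤ n := fun c d =>
    (natDegree_C_mul_le _ _).trans (hdeg c)
  -- the moments
  have key : ∀ k : ℕ, ∫ x in (-1 : ℝ)..1, Q x * x ^ k =
      ((1 + (-1) ^ k) * β₁ * ((-1) ^ n * poch (1 / 2 - ((k : ℝ) + 1) / 2) n / poch ((k : ℝ) + 1) (n + 1))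
      + ((-1) ^ k - 1) * β₂ * ((-1) ^ n * poch (1 - ((k : ℝ) + 1) / 2) n / poch ((k : ℝ) + 1) (n + 1))) / b := by
    intro k
    rw [← gAlp_int, ← gAlp_int]
    have cA : Continuous A := by
      rw [funext hAc]; exact Polynomial.continuous _
    have cB : Continuous B := by
      rw [funext hBc]; exact Polynomial.continuous _
    have eA : Set.EqOn (fun x => A x * x ^ k) (fun x => Q x * x ^ k) (Set.uIoo (-1 : ℝ) 0) := by
      intro x hx
      rw [Set.uIoo_of_le (by norm_num)] at hx
      simp only
      rw [hQ1 x ⟨hx.1.le, hx.2⟩]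
    have eB : Set.EqOn (fun x => B x * x ^ k) (fun x => Q x * x ^ k) (Set.uIoo (0 : ℝ) 1) := by
      intro x hx
      rw [Set.uIoo_of_le (by norm_num)] at hx
      simp only
      rw [hQ2 x ⟨hx.1.le, hx.2.le⟩]
    have iA : IntervalIntegrable (fun x => A x * x ^ k) volume (-1) 0 :=
      Continuous.intervalIntegrable (by fun_prop) _ _
    have iB : IntervalIntegrable (fun x => B x * x ^ k) volume 0 1 :=
      Continuous.intervalIntegrable (by fun_prop) _ _
    rw [← intervalIntegral.integral_add_adjacent_intervals (iA.congr_uIoo eA) (iB.congr_uIoo eB),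
      ← intervalIntegral.integral_congr_uIoo eA, ← intervalIntegral.integral_congr_uIoo eB]
    have r : ∫ x in (-1 : ℝ)..0, A x * x ^ k = ∫ x in (0 : ℝ)..1, A (-x) * (-x) ^ k := by
      rw [intervalIntegral.integral_comp_neg (fun x => A x * x ^ k)]; simp
    have i1 : IntervalIntegrable (fun x => (gAlp n (1 / 2)).eval x * x ^ k) volume 0 1 :=
      Continuous.intervalIntegrable (by fun_prop) _ _
    have i2 : IntervalIntegrable (fun x => (gAlp n 1).eval x * x ^ k) volume 0 1 :=
      Continuous.intervalIntegrable (by fun_prop) _ _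
    rw [r, ← intervalIntegral.integral_add (Continuous.intervalIntegrable (by fun_prop) _ _) iB]
    have : ∀ x, A (-x) * (-x) ^ k + B x * x ^ k =
        ((1 + (-1) ^ k) * β₁ / b) * ((gAlp n (1 / 2)).eval x * x ^ k) +
        (((-1) ^ k - 1) * β₂ / b) * ((gAlp n 1).eval x * x ^ k) := by
      intro x
      rw [hA, hB, neg_neg, gAlp_p, gAlp_q, neg_pow]
      ring
    simp only [this]
    rw [intervalIntegral.integral_add (i1.const_mul _) (i2.const_mul _),
      intervalIntegral.integral_const_mul, intervalIntegral.integral_const_mul]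
    ring
  refine ⟨⟨_, ?_, hBc⟩, ⟨_, ?_, hAc⟩, ?_, ?_⟩
  · rw [← natDegree_le_iff_degree_le]
    refine (natDegree_C_mul_le _ _).trans ?_
    have h0 : (C β₁ * gAlp n (1 / 2) - C β₂ * gAlp n 1).natDegree ≤ n :=
      (natDegree_sub_le_of_le (hcl _ _) (hcl _ _)).trans (max_self n).le
    rw [natDegree_le_iff_coeff_eq_zero] at h0 ⊢
    intro N hN
    rcases (by omega : N = n ∨ n < N) with rfl | h
    · rw [coeff_sub, coeff_C_mul, coeff_C_mul, hc1, hc2]; ring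
    · exact h0 N h
  · have h0 : (C b⁻¹ * (C β₁ * gAlp n (1 / 2) + C β₂ * gAlp n 1)).natDegree = n := by
      refine natDegree_eq_of_le_of_coeff_ne_zero
        ((natDegree_C_mul_le _ _).trans (natDegree_add_le_of_degree_le (hcl _ _) (hcl _ _))) ?_
      rw [coeff_C_mul, coeff_add, coeff_C_mul, coeff_C_mul, hc1, hc2]
      positivity
    have h1 : ((C b⁻¹ * (C β₁ * gAlp n (1 / 2) + C β₂ * gAlp n 1)).comp (-X)).natDegree = n := by
      rw [natDegree_comp, h0]; simp
    rw [degree_eq_iff_natDegree_eq_of_pos (by omega)]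
    exact h1
  · intro k hk
    rw [key]
    rcases Nat.even_or_odd' k with ⟨j, rfl | rfl⟩
    · have : (1 / 2 - (((2 * j : ℕ) : ℝ) + 1) / 2) = -(j : ℝ) := by push_cast; ring
      rw [this, poch_zero n j (by omega)]
      simp
    · have : (1 - (((2 * j + 1 : ℕ) : ℝ) + 1) / 2) = -(j : ℝ) := by push_cast; ring
      rw [this, poch_zero n j (by omega)]
      simp [pow_succ]
  · rw [key]
    have : (1 / 2 - (((2 * n : ℕ) : ℝ) + 1) / 2) = -(n : ℝ) := by push_cast; ring
    rw [this, poch_neg, hb, hβ₁, ← poch_fac]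
    have h3 : 0 < poch (((2 * n : ℕ) : ℝ) + 1) (n + 1) := ascPochhammer_pos _ _ (by positivity)
    have h4 : ((-1 : ℝ) ^ n) * (-1) ^ n = 1 := by rw [← mul_pow]; simp
    have h5 : ((-1 : ℝ) ^ (2 * n)) = 1 := by simp
    rw [h5, ← mul_assoc ((-1 : ℝ) ^ n), h4]
    generalize poch (((2 * n : ℕ) : ℝ) + 1) (n + 1) = u at h3 ⊢
    generalize poch ((n : ℝ) / 2 + 1) n = v at hP1 ⊢
    field_simp
    ring
end
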